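/- arXiv:1710.09773 — 2 statements merged into one kernel-verified Lean document; each statement's English description precedes it below -/
import Mathlib

section
/- Let a < b be real numbers, n ∈ ℕ, and c : Fin (n+1) → ℝ with c 0 ≠ 0. Let x : ℝ → ℝ be integrable on (a,b). If for almost every t ∈ (a,b) one has Σ_{j=0}^{n} c_j · (I_a^[n−j] x)(t) = 0, then x = 0 almost everywhere on (a,b). -/
/-!
Read from the lowest power upwards, the equation says `∑ k ≤ n, d k • I^k x = 0` with `d n ≠ 0`.

If `d 0 ≠ 0`, it is a Volterra equation of the second kind. Each `I^(k+1) x` is bounded by a constant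
times `Y t = ∫_a^t |x|`, so `|x| ≤ K Y` almost everywhere, and Grönwall's inequality for the primitive
of `Y` forces `Y = 0` and hence `x = 0` (`ae_zero_of_volterra`).

If `d 0 = 0`, the equation is one of the same kind, one degree lower, for `I x`. By induction on `n`
the continuous function `I x` vanishes, and Lebesgue's differentiation theorem gives `x = 0`
(`ae_zero_of_indefInt_ae_zero`).
-/

open MeasureTheory

/-- The indefinite-integral operator `(I_a g)(t) = ∫_a^t g(s) ds`. -/
noncomputable def indefInt (a : ℝ) (g : ℝ → ℝ) : ℝ → ℝ := fun t => ∫ s in a..t, g s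

lemma continuousOn_indefInt {a b : ℝ} (hab : a < b) {g : ℝ → ℝ}
    (hg : IntervalIntegrable g volume a b) : ContinuousOn (indefInt a g) (Set.Icc a b) := by
  have h := intervalIntegral.continuousOn_primitive_interval' hg Set.left_mem_uIcc
  rwa [Set.uIcc_of_le hab.le] at h

lemma intervalIntegrable_indefInt {a b : ℝ} (hab : a < b) {g : ℝ → ℝ}
    (hg : IntervalIntegrable g volume a b) : IntervalIntegrable (indefInt a g) volume a b :=
  (continuousOn_indefInt hab hg).intervalIntegrable_of_Icc hab.le

/-- Injectivity of the indefinite integral: the primitive is continuous, so it vanishes everywhere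
on `(a,b)`, and almost everywhere its derivative is `g`. -/
lemma ae_zero_of_indefInt_ae_zero {a b : ℝ} (hab : a < b) {g : ℝ → ℝ}
    (hg : IntervalIntegrable g volume a b)
    (h : ∀ᵐ t ∂(volume.restrict (Set.Ioo a b)), indefInt a g t = 0) :
    ∀ᵐ t ∂(volume.restrict (Set.Ioo a b)), g t = 0 := by
  have hzero : Set.EqOn (indefInt a g) (fun _ => 0) (Set.Ioo a b) :=
    Measure.eqOn_open_of_ae_eq h isOpen_Ioo
      ((continuousOn_indefInt hab hg).mono Set.Ioo_subset_Icc_self) continuousOn_const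
  rw [ae_restrict_iff' measurableSet_Ioo]
  filter_upwards [hg.ae_hasDerivAt_integral] with t ht hmem
  have hmem' : t ∈ Set.uIcc a b := by
    rw [Set.uIcc_of_le hab.le]; exact Set.Ioo_subset_Icc_self hmem
  have h1 : HasDerivAt (indefInt a g) (g t) t := ht hmem' a Set.left_mem_uIcc
  have h2 : HasDerivAt (indefInt a g) 0 t :=
    (hasDerivAt_const t (0 : ℝ)).congr_of_eventuallyEq
      (hzero.eventuallyEq_of_mem (isOpen_Ioo.mem_nhds hmem))
  exact h1.unique h2

lemma integral_abs_mono {a b : ℝ} {y : ℝ → ℝ} (hy : IntervalIntegrable y volume a b) {s t : ℝ}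
    (has : a ≤ s) (hst : s ≤ t) (htb : t ≤ b) :
    ∫ u in a..s, |y u| ≤ ∫ u in a..t, |y u| := by
  refine intervalIntegral.integral_mono_interval le_rfl has hst
    (Filter.Eventually.of_forall fun _ => abs_nonneg _) ?_
  refine hy.abs.mono_set ?_
  rw [Set.uIcc_of_le (has.trans hst), Set.uIcc_of_le ((has.trans hst).trans htb)]
  exact Set.Icc_subset_Icc_right htb

lemma abs_iterate_indefInt_le {a b : ℝ} {y : ℝ → ℝ}
    (hy : IntervalIntegrable y volume a b) (k : ℕ) :
    ∀ t ∈ Set.Icc a b,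
      |(indefInt a)^[k + 1] y t| ≤ (b - a) ^ k * ∫ u in a..t, |y u| := by
  induction k with
  | zero =>
    intro t ht
    simpa [indefInt] using intervalIntegral.abs_integral_le_integral_abs (f := y) ht.1
  | succ k ih =>
    intro t ht
    have hba : 0 ≤ b - a := by linarith [ht.1, ht.2]
    have hYt : 0 ≤ ∫ u in a..t, |y u| :=
      intervalIntegral.integral_nonneg ht.1 fun _ _ => abs_nonneg _
    rw [Function.iterate_succ_apply']
    have h : ‖∫ s in a..t, (indefInt a)^[k + 1] y s‖
        ≤ ((b - a) ^ k * ∫ u in a..t, |y u|) * |t - a| := by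
      refine intervalIntegral.norm_integral_le_of_norm_le_const fun s hs => ?_
      rw [Set.uIoc_of_le ht.1] at hs
      exact (ih s ⟨hs.1.le, hs.2.trans ht.2⟩).trans
        (mul_le_mul_of_nonneg_left (integral_abs_mono hy hs.1.le hs.2 ht.2) (by positivity))
    refine h.trans ?_
    rw [abs_of_nonneg (by linarith [ht.1]), pow_succ]
    calc _ ≤ ((b - a) ^ k * ∫ u in a..t, |y u|) * (b - a) :=
          mul_le_mul_of_nonneg_left (by linarith [ht.2]) (by positivity)
      _ = _ := by ring

/-- Grönwall's inequality for merely integrable functions. It is applied to the primitive `F` of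
`Y t = ∫_a^t |y|`, since `Y` itself need not be differentiable everywhere. -/
lemma ae_zero_of_abs_le_integral {a b K : ℝ} (hab : a < b) (hK : 0 ≤ K) {y : ℝ → ℝ}
    (hy : IntervalIntegrable y volume a b)
    (h : ∀ᵐ t ∂(volume.restrict (Set.Ioo a b)), |y t| ≤ K * ∫ u in a..t, |y u|) :
    ∀ᵐ t ∂(volume.restrict (Set.Ioo a b)), y t = 0 := by
  set Y : ℝ → ℝ := indefInt a fun u => |y u| with hY
  have hYc : ContinuousOn Y (Set.Icc a b) := continuousOn_indefInt hab hy.abs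
  have hYi : IntervalIntegrable Y volume a b := intervalIntegrable_indefInt hab hy.abs
  have hY0 : ∀ t, a ≤ t → 0 ≤ Y t := fun t ht =>
    intervalIntegral.integral_nonneg ht fun _ _ => abs_nonneg _
  have hsub : ∀ t ∈ Set.Icc a b, Set.uIcc a t ⊆ Set.uIcc a b := fun t ht => by
    rw [Set.uIcc_of_le ht.1, Set.uIcc_of_le hab.le]
    exact Set.Icc_subset_Icc_right ht.2
  have hYle : ∀ t ∈ Set.Icc a b, Y t ≤ K * indefInt a Y t := by
    intro t ht
    rw [indefInt, ← intervalIntegral.integral_const_mul]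
    refine intervalIntegral.integral_mono_ae_restrict ht.1 (hy.abs.mono_set (hsub t ht))
      ((hYi.mono_set (hsub t ht)).const_mul K) ?_
    rw [← restrict_Ioo_eq_restrict_Icc]
    exact ae_restrict_of_ae_restrict_of_subset (Set.Ioo_subset_Ioo_right ht.2) h
  have hF : ∀ t ∈ Set.Icc a b, indefInt a Y t = 0 := by
    intro t ht
    have hbd := norm_le_gronwallBound_of_norm_deriv_right_le (f := indefInt a Y) (f' := Y)
      (δ := 0) (K := K) (ε := 0) (continuousOn_indefInt hab hYi) ?_ ?_ ?_ t ht
    · rw [gronwallBound_ε0, zero_mul] at hbd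
      exact norm_le_zero_iff.mp hbd
    · intro s hs
      have hs' : s ∈ Set.Icc a b := Set.Ico_subset_Icc_self hs
      have hmem : Set.Icc a b ∈ nhdsWithin s (Set.Ioi s) :=
        Filter.mem_of_superset (Ioo_mem_nhdsGT hs.2) fun u hu =>
          ⟨hs.1.trans hu.1.le, hu.2.le⟩
      refine intervalIntegral.integral_hasDerivWithinAt_right (hYi.mono_set (hsub s hs'))
        (t := Set.Ioi s) ?_ ?_
      · exact ⟨Set.Icc a b, hmem, hYc.aestronglyMeasurable measurableSet_Icc⟩
      · exact (hYc s hs').mono_of_mem_nhdsWithin hmem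
    · simp [indefInt]
    · intro s hs
      have hs' : s ∈ Set.Icc a b := Set.Ico_subset_Icc_self hs
      have hFs : 0 ≤ indefInt a Y s :=
        intervalIntegral.integral_nonneg hs.1 fun u hu => hY0 u hu.1
      rw [Real.norm_of_nonneg (hY0 s hs.1), Real.norm_of_nonneg hFs, add_zero]
      exact hYle s hs'
  filter_upwards [h, ae_restrict_mem measurableSet_Ioo] with t ht hmem
  have hmem' := Set.Ioo_subset_Icc_self hmem
  have h1 : Y t ≤ 0 := by simpa [hF t hmem'] using hYle t hmem'
  have h2 : |y t| ≤ K * Y t := ht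
  exact abs_nonpos_iff.mp (h2.trans (mul_nonpos_of_nonneg_of_nonpos hK h1))

lemma ae_zero_of_volterra {a b : ℝ} (hab : a < b) (n : ℕ) (d : ℕ → ℝ) (hd : d 0 ≠ 0) {y : ℝ → ℝ}
    (hy : IntervalIntegrable y volume a b)
    (h : ∀ᵐ t ∂(volume.restrict (Set.Ioo a b)),
      ∑ k ∈ Finset.range (n + 1), d k * (indefInt a)^[k] y t = 0) :
    ∀ᵐ t ∂(volume.restrict (Set.Ioo a b)), y t = 0 := by
  have hba : 0 ≤ b - a := by linarith
  refine ae_zero_of_abs_le_integral (K := (∑ k ∈ Finset.range n, |d (k + 1)| * (b - a) ^ k) / |d 0|)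
    hab (by positivity) hy ?_
  filter_upwards [h, ae_restrict_mem measurableSet_Ioo] with t ht hmem
  rw [Finset.sum_range_succ'] at ht
  have hy0 : d 0 * y t = -∑ k ∈ Finset.range n, d (k + 1) * (indefInt a)^[k + 1] y t := by
    simp only [Function.iterate_zero, id] at ht
    linarith
  rw [div_mul_eq_mul_div, le_div_iff₀ (abs_pos.mpr hd), mul_comm, ← abs_mul, hy0, abs_neg,
    Finset.sum_mul]
  refine (Finset.abs_sum_le_sum_abs _ _).trans (Finset.sum_le_sum fun k _ => ?_)
  rw [abs_mul, mul_assoc]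
  exact mul_le_mul_of_nonneg_left
    (abs_iterate_indefInt_le hy k t (Set.Ioo_subset_Icc_self hmem)) (abs_nonneg _)

/-- The theorem with the coefficients indexed by the power of the integral operator. -/
lemma ae_zero_of_sum_iterate {a b : ℝ} (hab : a < b) (n : ℕ) :
    ∀ (d : ℕ → ℝ), d n ≠ 0 → ∀ y : ℝ → ℝ, IntervalIntegrable y volume a b →
      (∀ᵐ t ∂(volume.restrict (Set.Ioo a b)),
        ∑ k ∈ Finset.range (n + 1), d k * (indefInt a)^[k] y t = 0) →
      ∀ᵐ t ∂(volume.restrict (Set.Ioo a b)), y t = 0 := by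
  induction n with
  | zero => exact fun d hd y hy h => ae_zero_of_volterra hab 0 d hd hy h
  | succ n ih =>
    intro d hd y hy h
    by_cases hd0 : d 0 = 0
    · refine ae_zero_of_indefInt_ae_zero hab hy
        (ih (fun k => d (k + 1)) hd _ (intervalIntegrable_indefInt hab hy) ?_)
      filter_upwards [h] with t ht
      rw [Finset.sum_range_succ', hd0, zero_mul, add_zero] at ht
      simpa only [Function.iterate_succ_apply] using ht
    · exact ae_zero_of_volterra hab (n + 1) d hd0 hy h

/-- If `x` is integrable on `(a,b)`, `c 0 ≠ 0`, and
`Σ_{j=0}^{n} c_j · (I_a^[n−j] x)(t) = 0` a.e. on `(a,b)`, then `x = 0` a.e. on `(a,b)`. -/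
theorem homogeneous_integral_equation_trivial_solution
    (a b : ℝ) (hab : a < b) (n : ℕ) (c : Fin (n + 1) → ℝ) (hc : c 0 ≠ 0)
    (x : ℝ → ℝ) (hx : IntegrableOn x (Set.Ioo a b))
    (heq : ∀ᵐ t ∂(volume.restrict (Set.Ioo a b)),
      ∑ j : Fin (n + 1), c j * (indefInt a)^[n - (j : ℕ)] x t = 0) :
    ∀ᵐ t ∂(volume.restrict (Set.Ioo a b)), x t = 0 := by
  have hxi : IntervalIntegrable x volume a b :=
    (intervalIntegrable_iff_integrableOn_Ioo_of_le hab.le).mpr hx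
  -- `Fin.ofNat` reduces modulo `n + 1`, which changes nothing on the indices `n - k ≤ n`.
  refine ae_zero_of_sum_iterate hab n (fun k => c (Fin.ofNat (n + 1) (n - k))) ?_ x hxi ?_
  · simpa using hc
  · filter_upwards [heq] with t ht
    rw [← ht, ← Fin.sum_univ_eq_sum_range
      (fun k => c (Fin.ofNat (n + 1) (n - k)) * (indefInt a)^[k] x t), ← Equiv.sum_comp Fin.revPerm]
    refine Finset.sum_congr rfl fun j _ => ?_
    have hj : (j : ℕ) ≤ n := Nat.lt_succ_iff.mp j.isLt
    have h1 : ((Fin.revPerm j : Fin (n + 1)) : ℕ) = n - j := by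
      simp [Fin.val_rev]
    have h2 : Fin.ofNat (n + 1) (n - (n - (j : ℕ))) = j := by
      rw [Nat.sub_sub_self hj]
      exact Fin.ext (Nat.mod_eq_of_lt j.isLt)
    rw [h1, h2]
end

section
/- Let a < b be real numbers and let 0 ≤ β < α be real orders. If f : ℝ → ℂ is such that there exists g integrable on (a,b) with f(t) = (I_{a+}^α g)(t) for almost every t ∈ (a,b), then there exists h integrable on (a,b) with f(t) = (I_{a+}^β h)(t) for almost every t ∈ (a,b). That is, I_{a+}^α(L¹(a,b)) ⊆ I_{a+}^β(L¹(a,b)). -/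
/-!
The theorem is the semigroup law `I^α = I^β ∘ I^(α-β)` for Riemann–Liouville integrals, read as
associativity of convolution. Extend `g` by zero outside `(a,b)` and cut the kernel
`u ^ (α-1) / Γ(α)` off to `(0, b-a)`, which makes it integrable on `ℝ` (`rlKer`). On `(a,b)` the
operator `I_{a+}^α` is then convolution with this kernel (`rlInt_eq_convolution`). By the Beta
integral, the kernels of orders `γ` and `β` convolve to the kernel of order `γ + β` on
`(-∞, b-a)` (`rlKer_convolution`), the only range that matters for points of `(a,b)`.
So `h = I^(α-β) g` works, and it is integrable as a convolution of integrable functions.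
For `β = 0` the function `h = I^α g` works directly.
-/

open MeasureTheory

/-- The left Riemann–Liouville fractional integral of order `α ≥ 0` from `a`:
`(I_{a+}^α x)(t) = (1/Γ(α)) ∫_a^t (t−s)^(α−1) x(s) ds` for `α > 0`, and the identity for
`α = 0`. -/
noncomputable def rlInt (a : ℝ) (α : ℝ) (x : ℝ → ℂ) : ℝ → ℂ :=
  if α = 0 then x
  else fun t => (Real.Gamma α)⁻¹ • ∫ s in a..t, ((t - s) ^ (α - 1) : ℝ) • x s

open Set Convolution

/-- The Riemann–Liouville kernel `u ^ (α-1) / Γ(α)`, cut off to the interval `(0, c)`. -/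
noncomputable def rlKer (c α : ℝ) : ℝ → ℂ :=
  (Ioo 0 c).indicator fun u => (((Real.Gamma α)⁻¹ * u ^ (α - 1) : ℝ) : ℂ)

lemma rlKer_of_mem {c u : ℝ} (α : ℝ) (hu : u ∈ Ioo 0 c) :
    rlKer c α u = (((Real.Gamma α)⁻¹ * u ^ (α - 1) : ℝ) : ℂ) :=
  indicator_of_mem hu _

lemma rlKer_of_nonpos {u : ℝ} (c α : ℝ) (hu : u ≤ 0) : rlKer c α u = 0 :=
  indicator_of_notMem (fun h => absurd h.1 hu.not_gt) _

lemma integrable_rlKer {c α : ℝ} (hc : 0 < c) (hα : 0 < α) : Integrable (rlKer c α) := by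
  refine IntegrableOn.integrable_indicator ?_ measurableSet_Ioo
  have h := intervalIntegral.intervalIntegrable_rpow' (a := 0) (b := c) (r := α - 1) (by linarith)
  rw [intervalIntegrable_iff_integrableOn_Ioo_of_le hc.le] at h
  exact (h.const_mul _).ofReal

/-- On `(a,b)`, the fractional integral of a function vanishing to the left of `a` is its
convolution with the cut-off kernel. -/
lemma rlInt_eq_convolution {a b α t : ℝ} (hα : α ≠ 0) (ht : t ∈ Ioo a b) {x : ℝ → ℂ}
    (hx : ∀ s ≤ a, x s = 0) :
    rlInt a α x t = (x ⋆[ContinuousLinearMap.mul ℂ ℂ] rlKer (b - a) α) t := by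
  rw [rlInt, if_neg hα, convolution_def, intervalIntegral.integral_of_le ht.1.le,
    integral_Ioc_eq_integral_Ioo, ← integral_smul, ← integral_indicator measurableSet_Ioo]
  congr 1 with s
  by_cases hs : s ∈ Ioo a t
  · rw [indicator_of_mem hs, ContinuousLinearMap.mul_apply',
      rlKer_of_mem α ⟨by linarith [hs.2], by linarith [hs.1, ht.2]⟩]
    simp only [Complex.real_smul]
    push_cast
    ring
  · rw [indicator_of_notMem hs, ContinuousLinearMap.mul_apply']
    rcases le_or_gt s a with h | h
    · rw [hx s h, zero_mul]
    · rw [rlKer_of_nonpos _ _ (sub_nonpos.2 (not_lt.1 fun h' => hs ⟨h, h'⟩)), mul_zero]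

/-- A form of the Beta integral. It can fail for `u ≥ c`, where the cut-offs interfere. -/
lemma rlKer_convolution {c γ β u : ℝ} (hγ : 0 < γ) (hβ : 0 < β) (hu : u < c) :
    (rlKer c γ ⋆[ContinuousLinearMap.mul ℂ ℂ] rlKer c β) u = rlKer c (γ + β) u := by
  rw [convolution_def]
  rcases le_or_gt u 0 with h0 | h0
  · rw [rlKer_of_nonpos _ _ h0]
    refine integral_eq_zero_of_ae (Filter.Eventually.of_forall fun s => ?_)
    rcases le_or_gt s 0 with h | h
    · simp [rlKer_of_nonpos c γ h]
    · simp [rlKer_of_nonpos c β (show u - s ≤ 0 by linarith)]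
  · have key := Complex.betaIntegral_scaled γ β h0
    rw [Complex.betaIntegral_eq_Gamma_mul_div _ _ (by simpa) (by simpa),
      intervalIntegral.integral_of_le h0.le, integral_Ioc_eq_integral_Ioo] at key
    have hG1 : Complex.Gamma γ ≠ 0 := Complex.Gamma_ne_zero_of_re_pos (by simpa)
    have hG2 : Complex.Gamma β ≠ 0 := Complex.Gamma_ne_zero_of_re_pos (by simpa)
    calc _ = ∫ s, (Ioo 0 u).indicator (fun s : ℝ => (Complex.Gamma γ)⁻¹ * (Complex.Gamma β)⁻¹ *
            ((s : ℂ) ^ ((γ : ℂ) - 1) * ((u : ℂ) - s) ^ ((β : ℂ) - 1))) s := by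
          congr 1 with s
          rw [ContinuousLinearMap.mul_apply']
          by_cases hs : s ∈ Ioo 0 u
          · rw [indicator_of_mem hs, rlKer_of_mem γ ⟨hs.1, hs.2.trans hu⟩,
              rlKer_of_mem β ⟨by linarith [hs.2], by linarith [hs.1]⟩]
            push_cast [Complex.ofReal_cpow hs.1.le, Complex.ofReal_cpow (sub_nonneg.2 hs.2.le),
              ← Complex.Gamma_ofReal]
            ring
          · rw [indicator_of_notMem hs]
            rcases le_or_gt s 0 with h | h
            · rw [rlKer_of_nonpos c γ h, zero_mul]
            · rw [rlKer_of_nonpos c β (sub_nonpos.2 (not_lt.1 fun h' => hs ⟨h, h'⟩)), mul_zero]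
      _ = _ := by
          rw [integral_indicator measurableSet_Ioo, integral_const_mul, key,
            rlKer_of_mem _ ⟨h0, hu⟩]
          push_cast [Complex.ofReal_cpow h0.le, ← Complex.Gamma_ofReal]
          field_simp

/-- For real orders `0 ≤ β < α`, we have the inclusion
`I_{a+}^α(L¹(a,b)) ⊆ I_{a+}^β(L¹(a,b))`: if `f` agrees a.e. on `(a,b)` with the fractional
integral of order `α` of some integrable function, it also agrees a.e. on `(a,b)` with the
fractional integral of order `β` of some integrable function. -/
theorem rlInt_image_mono
    (a b : ℝ) (hab : a < b) (α β : ℝ) (hβ : 0 ≤ β) (hβα : β < α)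
    (f : ℝ → ℂ)
    (hf : ∃ g : ℝ → ℂ, IntegrableOn g (Set.Ioo a b) ∧
      ∀ᵐ t ∂(volume.restrict (Set.Ioo a b)), f t = rlInt a α g t) :
    ∃ h : ℝ → ℂ, IntegrableOn h (Set.Ioo a b) ∧
      ∀ᵐ t ∂(volume.restrict (Set.Ioo a b)), f t = rlInt a β h t := by
  obtain ⟨g, hg, hfg⟩ := hf
  have hα : 0 < α := hβ.trans_lt hβα
  have hc : 0 < b - a := sub_pos.2 hab
  set G : ℝ → ℂ := (Ioo a b).indicator g with hGdef
  have hG : Integrable G := hg.integrable_indicator measurableSet_Ioo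
  have hG0 : ∀ s ≤ a, G s = 0 := fun s hs =>
    indicator_of_notMem (fun h => absurd h.1 hs.not_gt) _
  have hα_eq : ∀ t ∈ Ioo a b,
      rlInt a α g t = (G ⋆[ContinuousLinearMap.mul ℂ ℂ] rlKer (b - a) α) t := by
    intro t ht
    rw [← rlInt_eq_convolution hα.ne' ht hG0, rlInt, rlInt, if_neg hα.ne', if_neg hα.ne']
    rw [intervalIntegral.integral_of_le ht.1.le, intervalIntegral.integral_of_le ht.1.le]
    congr 1
    refine setIntegral_congr_fun measurableSet_Ioc fun s hs => ?_
    simp only [hGdef]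
    rw [indicator_of_mem (show s ∈ Ioo a b from ⟨hs.1, hs.2.trans_lt ht.2⟩)]
  rcases hβ.eq_or_lt with rfl | hβ
  · refine ⟨G ⋆[ContinuousLinearMap.mul ℂ ℂ] rlKer (b - a) α,
      (hG.integrable_convolution _ (integrable_rlKer hc hα)).integrableOn, ?_⟩
    filter_upwards [hfg, ae_restrict_mem measurableSet_Ioo] with t h1 ht
    rw [h1, hα_eq t ht, rlInt, if_pos rfl]
  have hγ : 0 < α - β := sub_pos.2 hβα
  have hkγ := integrable_rlKer hc hγ
  have hkβ := integrable_rlKer hc hβ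
  refine ⟨G ⋆[ContinuousLinearMap.mul ℂ ℂ] rlKer (b - a) (α - β),
    (hG.integrable_convolution _ hkγ).integrableOn, ?_⟩
  have hexists := hG.norm.ae_convolution_exists (ContinuousLinearMap.mul ℝ ℝ)
    (hkγ.norm.integrable_convolution (ContinuousLinearMap.mul ℝ ℝ) hkβ.norm)
  filter_upwards [hfg, ae_restrict_mem measurableSet_Ioo, ae_restrict_of_ae hexists] with t h1 ht hex
  rw [h1, hα_eq t ht, rlInt_eq_convolution hβ.ne' ht, convolution_assoc
    (ContinuousLinearMap.mul ℂ ℂ) (ContinuousLinearMap.mul ℂ ℂ)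
    (ContinuousLinearMap.mul ℂ ℂ) (ContinuousLinearMap.mul ℂ ℂ)
    (fun x y z => mul_assoc x y z) hG.aestronglyMeasurable hkγ.aestronglyMeasurable
    hkβ.aestronglyMeasurable (hG.ae_convolution_exists _ hkγ)
    (hkγ.norm.ae_convolution_exists _ hkβ.norm) hex]
  · rw [convolution_def, convolution_def]
    congr 1 with s
    by_cases hs : s ∈ Ioo a b
    · rw [rlKer_convolution hγ hβ (by linarith [ht.2, hs.1]), sub_add_cancel]
    · rw [hGdef, indicator_of_notMem hs, map_zero]
      rfl
  · intro s hs
    rw [convolution_def]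
    refine integral_eq_zero_of_ae (Filter.Eventually.of_forall fun r => ?_)
    rcases le_or_gt r a with h | h
    · simp [hG0 r h]
    · simp [rlKer_of_nonpos (b - a) (α - β) (show s - r ≤ 0 by linarith)]
end
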